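/- arXiv:1302.3078 — 2 statements merged into one kernel-verified Lean document; each statement's English description precedes it below -/
import Mathlib

section
/- Let G be a cyclic group of prime order p ≥ 5 and S a zero-sum sequence over G∖{0}. Then min L(S) ≤ min{ |S|/2, 2|S|/(p+5) + 2(p−1)(1/2 + log((p+3)/2)) }, where min L(S) is the minimal number of minimal zero-sum sequences into which S factors. -/
/-- A minimal zero-sum sequence over an abelian group. -/
def IsMinZS {G : Type*} [AddCommGroup G] (S : Multiset G) : Prop :=
  S ≠ 0 ∧ S.sum = 0 ∧ ∀ T : Multiset G, T ≤ S → T ≠ 0 → T ≠ S → T.sum ≠ 0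

/-- The minimal length of a factorization of a zero-sum sequence into
minimal zero-sum sequences. -/
noncomputable def minL {G : Type*} [AddCommGroup G] (S : Multiset G) : ℕ :=
  sInf { n | ∃ F : Multiset (Multiset G),
    (∀ B ∈ F, IsMinZS B) ∧ F.sum = S ∧ Multiset.card F = n }

/-! Over a group of prime order `p`, eliminate the elements of the support of `S` one at a time. Let
`g` be an element of least multiplicity `v` among `d + 1` nonzero elements containing the support,
and let `r = ⌊(p - 1) / d⌋ + 1`. If `v ≤ r`, factor `S` arbitrarily: at most `r` atoms contain `g`.
If `v > r`, then by Cauchy-Davenport `-(v • g)` is a sum of at most `r` terms taken from the other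
`d` elements, and by minimality of `v` these terms are available in `S`; this gives a zero-sum
subsequence containing all copies of `g`, whose atoms are `g ^ p` or use one of the `r` extra terms.
Since the atoms `g ^ p` are paid for by their length, this leads to
`p * min L(S) ≤ |S| + p * ∑ d ∈ [1, p - 2], (⌊(p - 1) / d⌋ + 1)`, a harmonic sum. -/

theorem multiset_le_of_card_le_count {α : Type*} [DecidableEq α] {U S : Multiset α}
    (h : ∀ x ∈ U, U.card ≤ S.count x) : U ≤ S := by
  refine Multiset.le_iff_count.2 fun x ↦ ?_
  by_cases hx : x ∈ U
  · exact (Multiset.count_le_card x U).trans (h x hx)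
  · simp [hx]

section Factorization

variable {G : Type*} [AddCommGroup G] {S T : Multiset G} {F F' : Multiset (Multiset G)}

theorem IsMinZS.card_pos (hS : IsMinZS S) : 0 < S.card :=
  Multiset.card_pos.2 hS.1

theorem IsMinZS.addOrderOf_le_card {g : G} (hS : IsMinZS S) (hg : ∀ x ∈ S, x = g) :
    addOrderOf g ≤ S.card := by
  refine Nat.le_of_dvd hS.card_pos (addOrderOf_dvd_of_nsmul_eq_zero ?_)
  rw [← Multiset.sum_replicate, ← Multiset.eq_replicate_card.2 hg, hS.2.1]

theorem exists_add_eq_of_not_isMinZS (hS0 : S ≠ 0) (hS : S.sum = 0) (hmin : ¬ IsMinZS S) :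
    ∃ T U : Multiset G, T + U = S ∧ T < S ∧ U < S ∧ T.sum = 0 ∧ U.sum = 0 := by
  obtain ⟨T, hTS, hT0, hne, hT⟩ : ∃ T ≤ S, T ≠ 0 ∧ T ≠ S ∧ T.sum = 0 := by
    simpa [IsMinZS, hS0, hS] using hmin
  obtain ⟨U, rfl⟩ := Multiset.le_iff_exists_add.1 hTS
  refine ⟨T, U, rfl, lt_of_le_of_ne hTS hne, ?_, hT, ?_⟩
  · exact lt_add_of_pos_left U (Multiset.bot_eq_zero ▸ bot_lt_iff_ne_bot.2 hT0)
  · simpa [hT] using hS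

/-- `F` is a factorization of the sequence `S` into minimal zero-sum sequences; these are the
factorizations whose lengths enter `minL S`. -/
def IsFactorization (F : Multiset (Multiset G)) (S : Multiset G) : Prop :=
  (∀ B ∈ F, IsMinZS B) ∧ F.sum = S

theorem IsFactorization.add (hF : IsFactorization F S) (hF' : IsFactorization F' T) :
    IsFactorization (F + F') (S + T) :=
  ⟨fun B hB ↦ (Multiset.mem_add.1 hB).elim (hF.1 B) (hF'.1 B), by
    rw [Multiset.sum_add, hF.2, hF'.2]⟩

theorem IsFactorization.sum_eq_zero (hF : IsFactorization F S) : S.sum = 0 := by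
  rw [← hF.2, ← Multiset.coe_sumAddMonoidHom, map_multiset_sum]
  refine Multiset.sum_eq_zero fun x hx ↦ ?_
  obtain ⟨B, hB, rfl⟩ := Multiset.mem_map.1 hx
  exact (hF.1 B hB).2.1

theorem exists_isFactorization (hS : S.sum = 0) : ∃ F, IsFactorization F S := by
  induction S using Multiset.strongInductionOn with
  | ih S ih =>
    by_cases hS0 : S = 0
    · exact ⟨0, by simp, by simp [hS0]⟩
    by_cases hmin : IsMinZS S
    · exact ⟨{S}, by simpa using hmin, by simp⟩
    obtain ⟨T, U, rfl, hTS, hUS, hT, hU⟩ := exists_add_eq_of_not_isMinZS hS0 hS hmin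
    obtain ⟨F, hF⟩ := ih T hTS hT
    obtain ⟨F', hF'⟩ := ih U hUS hU
    exact ⟨F + F', hF.add hF'⟩

theorem IsFactorization.mul_card_le {k : ℕ} (hF : IsFactorization F S) (f : Multiset G →+ ℕ)
    (h : ∀ B ∈ F, k ≤ f B) : k * F.card ≤ f S := by
  rw [← hF.2, map_multiset_sum, mul_comm]
  simpa using Multiset.card_nsmul_le_sum (s := F.map f) (a := k) (by simpa using h)

theorem IsFactorization.minL_le_card (hF : IsFactorization F S) : minL S ≤ F.card :=
  Nat.sInf_le ⟨F, hF.1, hF.2, rfl⟩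

theorem exists_isFactorization_card_eq_minL (hS : S.sum = 0) :
    ∃ F, IsFactorization F S ∧ F.card = minL S := by
  obtain ⟨F₀, hF₀⟩ := exists_isFactorization hS
  obtain ⟨F, hF, hFS, hcard⟩ := Nat.sInf_mem (s := { n | ∃ F : Multiset (Multiset G),
    (∀ B ∈ F, IsMinZS B) ∧ F.sum = S ∧ Multiset.card F = n }) ⟨_, F₀, hF₀.1, hF₀.2, rfl⟩
  exact ⟨F, ⟨hF, hFS⟩, hcard⟩

theorem minL_add_le (hS : S.sum = 0) (hT : T.sum = 0) : minL (S + T) ≤ minL S + minL T := by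
  obtain ⟨F, hF, hFS⟩ := exists_isFactorization_card_eq_minL hS
  obtain ⟨F', hF', hFT⟩ := exists_isFactorization_card_eq_minL hT
  simpa [hFS, hFT] using (hF.add hF').minL_le_card

theorem mul_minL_le {k : ℕ} (hS : S.sum = 0) (f : Multiset G →+ ℕ)
    (h : ∀ B ≤ S, IsMinZS B → k ≤ f B) : k * minL S ≤ f S := by
  obtain ⟨F, hF, hFS⟩ := exists_isFactorization_card_eq_minL hS
  exact hFS ▸ hF.mul_card_le f fun B hB ↦
    h B (hF.2 ▸ Multiset.le_sum_of_mem hB) (hF.1 B hB)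

theorem two_mul_minL_le_card (hS : S.sum = 0) (h0 : 0 ∉ S) : 2 * minL S ≤ S.card := by
  refine mul_minL_le hS Multiset.cardHom fun B hBS hB ↦ ?_
  change 1 < B.card
  refine lt_of_le_of_ne hB.card_pos fun hcard ↦ ?_
  obtain ⟨a, rfl⟩ := Multiset.card_eq_one.1 hcard.symm
  have ha : a = 0 := by simpa using hB.2.1
  exact h0 (ha ▸ Multiset.singleton_le.1 hBS)

variable [DecidableEq G]

theorem addOrderOf_mul_minL_le (hS : S.sum = 0) (g : G) :
    addOrderOf g * minL S ≤ S.card + addOrderOf g * S.countP (· ≠ g) := by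
  refine mul_minL_le hS
    (Multiset.cardHom + addOrderOf g • Multiset.countPAddMonoidHom (· ≠ g)) fun B _ hB ↦ ?_
  change addOrderOf g ≤ B.card + addOrderOf g * B.countP (· ≠ g)
  rcases (B.countP (· ≠ g)).eq_zero_or_pos with hzero | hpos
  · have hg : ∀ x ∈ B, x = g := by simpa [Multiset.countP_eq_zero] using hzero
    exact le_add_right (hB.addOrderOf_le_card hg)
  · exact le_add_left (Nat.le_mul_of_pos_right _ hpos)

theorem exists_add_eq_notMem_minL_le_count (hS : S.sum = 0) (g : G) :
    ∃ X Y : Multiset G, X + Y = S ∧ X.sum = 0 ∧ Y.sum = 0 ∧ g ∉ Y ∧ minL X ≤ S.count g := by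
  obtain ⟨F, hF, rfl⟩ := exists_isFactorization hS
  have hwith : IsFactorization (F.filter (g ∈ ·)) (F.filter (g ∈ ·)).sum :=
    ⟨fun B hB ↦ hF B (Multiset.mem_of_mem_filter hB), rfl⟩
  have hwithout : IsFactorization (F.filter (g ∉ ·)) (F.filter (g ∉ ·)).sum :=
    ⟨fun B hB ↦ hF B (Multiset.mem_of_mem_filter hB), rfl⟩
  have hadd : (F.filter (g ∈ ·)).sum + (F.filter (g ∉ ·)).sum = F.sum := by
    rw [← Multiset.sum_add, Multiset.filter_add_not]
  refine ⟨_, _, hadd, hwith.sum_eq_zero, hwithout.sum_eq_zero, fun hg ↦ ?_, ?_⟩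
  · obtain ⟨B, hB, hgB⟩ := Multiset.mem_join.1 hg
    exact Multiset.of_mem_filter hB hgB
  · calc minL (F.filter (g ∈ ·)).sum
        ≤ (F.filter (g ∈ ·)).card := hwith.minL_le_card
      _ ≤ (F.filter (g ∈ ·)).sum.count g := by
        simpa using hwith.mul_card_le (k := 1) (Multiset.countAddMonoidHom g) fun B hB ↦
          Multiset.one_le_count_iff_mem.2 (Multiset.of_mem_filter (p := (g ∈ ·)) hB)
      _ ≤ F.sum.count g := Multiset.count_le_of_le g (hadd ▸ Multiset.le_add_right _ _)

end Factorization

section Sumset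

open scoped Pointwise

variable {G : Type*} [DecidableEq G]

theorem exists_multiset_of_mem_nsmul_insert_zero [AddCommMonoid G] {A : Finset G} {r : ℕ} {y : G}
    (hy : y ∈ r • insert 0 A) : ∃ U : Multiset G, U.card ≤ r ∧ (∀ x ∈ U, x ∈ A) ∧ U.sum = y := by
  induction r generalizing y with
  | zero => exact ⟨0, by simp, by simp, by simpa [eq_comm] using hy⟩
  | succ r ih =>
    rw [succ_nsmul] at hy
    obtain ⟨z, hz, a, ha, rfl⟩ := Finset.mem_add.1 hy
    obtain ⟨U, hUr, hUA, rfl⟩ := ih hz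
    rcases Finset.mem_insert.1 ha with rfl | ha
    · exact ⟨U, hUr.trans r.le_succ, hUA, by simp⟩
    · exact ⟨a ::ₘ U, by simpa using hUr, by simpa [ha] using hUA, by simp [add_comm]⟩

theorem min_minOrder_le_card_nsmul [AddGroup G] {A : Finset G} (hA : A.Nonempty) (r : ℕ) :
    min (AddMonoid.minOrder G) ↑(r * (A.card - 1) + 1) ≤ ((r • A).card : ℕ∞) := by
  induction r with
  | zero => simp
  | succ r ih =>
    have hA1 : 1 ≤ A.card := hA.card_pos
    calc min (AddMonoid.minOrder G) ↑((r + 1) * (A.card - 1) + 1)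
        ≤ min (AddMonoid.minOrder G) ↑((r • A).card + A.card - 1) := by
          rcases min_le_iff.1 ih with hmin | hr
          · refine (min_le_left _ _).trans (le_min le_rfl (hmin.trans ?_))
            exact_mod_cast Nat.le_sub_of_add_le (Nat.add_le_add_left hA1 _)
          · refine min_le_min_left _ ?_
            rw [Nat.cast_le] at hr ⊢
            rw [add_one_mul]
            lia
      _ ≤ ((r • A + A).card : ℕ∞) := cauchy_davenport_minOrder_add hA.nsmul hA
      _ = (((r + 1) • A).card : ℕ∞) := by rw [succ_nsmul]

end Sumset

section PrimeOrder

variable {G : Type*} [AddCommGroup G]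

theorem addOrderOf_eq_natCard_of_prime (hG : (Nat.card G).Prime) {g : G} (hg : g ≠ 0) :
    addOrderOf g = Nat.card G :=
  haveI := Fact.mk hG
  addOrderOf_eq_card_of_zmultiples_eq_top (zmultiples_eq_top_of_prime_card rfl hg)

open scoped Pointwise in
theorem exists_multiset_sum_eq_of_prime (hG : (Nat.card G).Prime) {A : Finset G} (hA : 0 ∉ A)
    {r : ℕ} (hr : Nat.card G ≤ r * A.card + 1) (y : G) :
    ∃ U : Multiset G, U.card ≤ r ∧ (∀ x ∈ U, x ∈ A) ∧ U.sum = y := by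
  classical
  have : Finite G := Nat.finite_of_card_ne_zero hG.ne_zero
  have : Fintype G := Fintype.ofFinite G
  have horder : (Nat.card G : ℕ∞) ≤ AddMonoid.minOrder G :=
    AddMonoid.le_minOrder.2 fun g hg _ ↦ (addOrderOf_eq_natCard_of_prime hG hg).symm ▸ le_rfl
  have hcard : Nat.card G ≤ (r • insert 0 A).card := by
    have hcd := min_minOrder_le_card_nsmul (Finset.insert_nonempty 0 A) r
    rw [Finset.card_insert_of_notMem hA, Nat.add_sub_cancel] at hcd
    exact_mod_cast (le_min horder (Nat.cast_le.2 hr)).trans hcd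
  rw [Nat.card_eq_fintype_card] at hcard
  have huniv : r • insert 0 A = Finset.univ :=
    Finset.eq_univ_of_card _ ((Finset.card_le_univ _).antisymm hcard)
  exact exists_multiset_of_mem_nsmul_insert_zero (huniv ▸ Finset.mem_univ y)

theorem exists_add_eq_notMem_natCard_mul_minL_le [DecidableEq G] (hG : (Nat.card G).Prime)
    {A : Finset G} (hA : 0 ∉ A) {g : G} (hg : g ≠ 0) (hgA : g ∉ A) {r : ℕ}
    (hr : Nat.card G ≤ r * A.card + 1) {S : Multiset G} (hS : S.sum = 0)
    (hmin : ∀ x ∈ A, S.count g ≤ S.count x) :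
    ∃ X Y : Multiset G, X + Y = S ∧ X.sum = 0 ∧ Y.sum = 0 ∧ g ∉ Y ∧
      Nat.card G * minL X ≤ X.card + Nat.card G * r := by
  rcases le_total (S.count g) r with hfew | hmany
  · obtain ⟨X, Y, hXY, hX, hY, hgY, hle⟩ := exists_add_eq_notMem_minL_le_count hS g
    exact ⟨X, Y, hXY, hX, hY, hgY, le_add_left (Nat.mul_le_mul_left _ (hle.trans hfew))⟩
  obtain ⟨U, hUr, hUA, hU⟩ := exists_multiset_sum_eq_of_prime hG hA hr (-(S.count g • g))
  have hgU : g ∉ U := fun h ↦ hgA (hUA g h)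
  have hUS : U ≤ S := multiset_le_of_card_le_count fun x hx ↦
    (hUr.trans hmany).trans (hmin x (hUA x hx))
  have hXS : Multiset.replicate (S.count g) g + U ≤ S := by
    refine Multiset.le_iff_count.2 fun x ↦ ?_
    rcases eq_or_ne g x with rfl | hx
    · simp [hgU]
    · simpa [Multiset.count_replicate, hx] using Multiset.count_le_of_le x hUS
  have hX : (Multiset.replicate (S.count g) g + U).sum = 0 := by simp [hU]
  obtain ⟨Y, hXY⟩ := Multiset.le_iff_exists_add.1 hXS
  refine ⟨_, Y, hXY.symm, hX, ?_, ?_, ?_⟩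
  · rwa [hXY, Multiset.sum_add, hX, zero_add] at hS
  · have hcount := congrArg (Multiset.count g) hXY
    simpa [hgU] using hcount
  · have hne : (Multiset.replicate (S.count g) g + U).countP (· ≠ g) ≤ r := by
      have hrep : (Multiset.replicate (S.count g) g).countP (· ≠ g) = 0 :=
        Multiset.countP_eq_zero.2 fun x hx ↦ not_not.2 (Multiset.eq_of_mem_replicate hx)
      rw [Multiset.countP_add, hrep, zero_add]
      exact (Multiset.countP_le_card _ U).trans hUr
    have hle := addOrderOf_mul_minL_le hX g
    rw [addOrderOf_eq_natCard_of_prime hG hg] at hle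
    exact hle.trans (by gcongr)

theorem natCard_mul_minL_le_of_subset (hG : (Nat.card G).Prime) {A : Finset G} (hA : 0 ∉ A)
    (hne : A.Nonempty) {S : Multiset G} (hSA : ∀ x ∈ S, x ∈ A) (hS : S.sum = 0) :
    Nat.card G * minL S ≤
      S.card + Nat.card G * ∑ d ∈ Finset.Ico 1 A.card, ((Nat.card G - 1) / d + 1) := by
  classical
  induction A using Finset.strongInduction generalizing S with
  | H A ih =>
    rcases hne.exists_eq_singleton_or_nontrivial with ⟨g, rfl⟩ | hnontrivial
    · have hg : g ≠ 0 := fun h ↦ hA (by simp [h])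
      have hSg : S.countP (· ≠ g) = 0 := by simpa [Multiset.countP_eq_zero] using hSA
      simpa [addOrderOf_eq_natCard_of_prime hG hg, hSg] using addOrderOf_mul_minL_le hS g
    obtain ⟨g, hgA, hmin⟩ := A.exists_min_image S.count hne
    have hne' : (A.erase g).Nonempty := hnontrivial.erase_nonempty
    have h0 : 0 ∉ A.erase g := fun h ↦ hA (Finset.mem_of_mem_erase h)
    have hr : Nat.card G ≤ ((Nat.card G - 1) / (A.erase g).card + 1) * (A.erase g).card + 1 := by
      have := Nat.lt_mul_div_succ (Nat.card G - 1) hne'.card_pos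
      rw [mul_comm]
      lia
    obtain ⟨X, Y, rfl, hX, hY, hgY, hXle⟩ := exists_add_eq_notMem_natCard_mul_minL_le hG h0
      (ne_of_mem_of_not_mem hgA hA) (Finset.notMem_erase g A) hr hS
      fun x hx ↦ hmin x (Finset.mem_of_mem_erase hx)
    have hYA : ∀ x ∈ Y, x ∈ A.erase g := fun x hx ↦
      Finset.mem_erase.2 ⟨ne_of_mem_of_not_mem hx hgY, hSA x (Multiset.mem_add.2 (.inr hx))⟩
    have hYle := ih _ (Finset.erase_ssubset hgA) h0 hne' hYA hY
    have hadd := Nat.mul_le_mul_left (Nat.card G) (minL_add_le hX hY)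
    rw [← Finset.card_erase_add_one hgA, Finset.sum_Ico_succ_top hne'.card_pos, Multiset.card_add]
    linarith

theorem natCard_mul_minL_le (hG : (Nat.card G).Prime) {S : Multiset G} (h0 : 0 ∉ S)
    (hS : S.sum = 0) :
    Nat.card G * minL S ≤
      S.card + Nat.card G * ∑ d ∈ Finset.Ico 1 (Nat.card G - 1), ((Nat.card G - 1) / d + 1) := by
  classical
  have : Finite G := Nat.finite_of_card_ne_zero hG.ne_zero
  have : Fintype G := Fintype.ofFinite G
  have hcard : (Finset.univ.erase (0 : G)).card = Nat.card G - 1 := by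
    rw [Finset.card_erase_of_mem (Finset.mem_univ 0), Finset.card_univ, Nat.card_eq_fintype_card]
  have hne : (Finset.univ.erase (0 : G)).Nonempty :=
    Finset.card_pos.1 (hcard ▸ Nat.sub_pos_of_lt hG.one_lt)
  have hle := natCard_mul_minL_le_of_subset hG (Finset.notMem_erase 0 _) hne
    (fun x hx ↦ Finset.mem_erase.2 ⟨ne_of_mem_of_not_mem hx h0, Finset.mem_univ x⟩) hS
  rwa [hcard] at hle

end PrimeOrder

section HarmonicBound

theorem sum_Ico_div_add_one_le (n : ℕ) :
    ((∑ d ∈ Finset.Ico 1 n, (n / d + 1) : ℕ) : ℝ) ≤ n * (1 + Real.log n) + n := by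
  calc ((∑ d ∈ Finset.Ico 1 n, (n / d + 1) : ℕ) : ℝ)
      ≤ ((∑ d ∈ Finset.Icc 1 n, (n / d + 1) : ℕ) : ℝ) := by
        exact_mod_cast Finset.sum_le_sum_of_subset Finset.Ico_subset_Icc_self
    _ ≤ ∑ d ∈ Finset.Icc 1 n, ((n : ℝ) * (d : ℝ)⁻¹ + 1) := by
        push_cast
        gcongr with d
        exact Nat.cast_div_le
    _ = n * (harmonic n : ℝ) + n := by
        simp [harmonic_eq_sum_Icc, Finset.sum_add_distrib, Finset.mul_sum]
    _ ≤ n * (1 + Real.log n) + n := by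
        gcongr
        exact harmonic_le_one_add_log n

theorem one_add_log_le_two_mul_log {x : ℝ} (hx : 0 < x) :
    1 + Real.log x ≤ 2 * Real.log ((x + 4) / 2) := by
  have hsq : Real.exp 1 * x ≤ ((x + 4) / 2) ^ 2 := by
    nlinarith [Real.exp_one_lt_three, sq_nonneg (x - 4)]
  calc 1 + Real.log x = Real.log (Real.exp 1 * x) := by
        rw [Real.log_mul (Real.exp_ne_zero 1) hx.ne', Real.log_exp]
    _ ≤ Real.log (((x + 4) / 2) ^ 2) := Real.log_le_log (by positivity) hsq
    _ = 2 * Real.log ((x + 4) / 2) := by rw [Real.log_pow, Nat.cast_ofNat]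

theorem sum_Ico_div_add_one_le_log {n : ℕ} (hn : 0 < n) :
    ((∑ d ∈ Finset.Ico 1 n, (n / d + 1) : ℕ) : ℝ) ≤
      2 * n * (1 / 2 + Real.log (((n : ℝ) + 4) / 2)) := by
  calc ((∑ d ∈ Finset.Ico 1 n, (n / d + 1) : ℕ) : ℝ)
      ≤ n * (1 + Real.log n) + n := sum_Ico_div_add_one_le n
    _ ≤ n * (2 * Real.log (((n : ℝ) + 4) / 2)) + n := by
        gcongr
        exact one_add_log_le_two_mul_log (Nat.cast_pos.2 hn)
    _ = 2 * n * (1 / 2 + Real.log (((n : ℝ) + 4) / 2)) := by ring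

end HarmonicBound

theorem minL_le_card_div_add_log {G : Type*} [AddCommGroup G] (hG : (Nat.card G).Prime)
    {S : Multiset G} (h0 : 0 ∉ S) (hS : S.sum = 0) :
    (minL S : ℝ) ≤ (S.card : ℝ) / Nat.card G +
      2 * ((Nat.card G : ℝ) - 1) * (1 / 2 + Real.log (((Nat.card G : ℝ) + 3) / 2)) := by
  have hpos : (0 : ℝ) < Nat.card G := Nat.cast_pos.2 hG.pos
  have hle : (Nat.card G : ℝ) * minL S ≤ S.card + Nat.card G *
      ((∑ d ∈ Finset.Ico 1 (Nat.card G - 1), ((Nat.card G - 1) / d + 1) : ℕ) : ℝ) := by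
    exact_mod_cast natCard_mul_minL_le hG h0 hS
  have hlog := sum_Ico_div_add_one_le_log (Nat.sub_pos_of_lt hG.one_lt)
  rw [Nat.cast_pred hG.pos, show (Nat.card G : ℝ) - 1 + 4 = Nat.card G + 3 by ring] at hlog
  refine le_trans ?_ (add_le_add_right hlog _)
  rwa [div_add' _ _ _ hpos.ne', le_div_iff₀' hpos, mul_comm _ (Nat.card G : ℝ)]

theorem stmt9 (G : Type*) [AddCommGroup G] [Fintype G] (hcyc : IsAddCyclic G)
    (p : ℕ) (hp : p.Prime) (hcard : Fintype.card G = p) (h5 : 5 ≤ p)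
    (S : Multiset G) (h0 : ∀ g ∈ S, g ≠ 0) (hsum : S.sum = 0) :
    (minL S : ℝ) ≤ min ((Multiset.card S : ℝ) / 2)
      (2 * (Multiset.card S : ℝ) / (p + 5) +
        2 * ((p : ℝ) - 1) * (1 / 2 + Real.log (((p : ℝ) + 3) / 2))) := by
  rw [← Nat.card_eq_fintype_card] at hcard
  subst hcard
  have h0S : (0 : G) ∉ S := fun h ↦ h0 0 h rfl
  refine le_min ?_ ?_
  · rw [le_div_iff₀' two_pos]
    exact_mod_cast two_mul_minL_le_card hsum h0S
  · have hp5 : (5 : ℝ) ≤ Nat.card G := by exact_mod_cast h5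
    have hdiv : (S.card : ℝ) / Nat.card G ≤ 2 * S.card / (Nat.card G + 5) := by
      rw [div_le_div_iff₀ (by positivity) (by positivity), mul_right_comm, mul_comm]
      gcongr
      linarith
    exact (minL_le_card_div_add_log hp h0S hsum).trans (add_le_add_left hdiv _)
end

section
/- Let n be a positive integer with ω(n) = s ≥ 2 distinct prime factors and n ≥ 4376. Then ⌊(n+1)/(2^{s+1}√(2s−1)+1)⌋ ≥ n/(2^{s+1}√(2s)). -/
/-!
Write `T = 2 ^ (s + 1)`, `a = √(2s - 1)` and `b = √(2s)`. As `⌊y⌋ > y - 1`, it suffices that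
`T² a b ≤ n (T (b - a) - 1)`, that is, `T² a b (a + b) ≤ n (T - (a + b))`, because `b² - a² = 1`.
With `q = a² + b² = 4s - 1`, the inequalities `2 a b ≤ q` and `6 (a + b) ≤ q + 18` remove the
square roots and leave `T² q (q + 18) ≤ 2 n (6 T - (q + 18))`. For `s ≤ 5` this follows from
`4376 ≤ n`. For `s ≥ 6` it follows from `2 (2s - 1)‼ ≤ n`, which holds because the odd prime
factors of `n` are distinct odd numbers exceeding `1`.
-/

section PrimeProducts

open scoped Nat

theorem primeCounting'_two_mul_add_one_le (k : ℕ) : Nat.primeCounting' (2 * k + 1) ≤ k := by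
  induction k with
  | zero => simp [Nat.primeCounting', Nat.count_succ, Nat.not_prime_zero]
  | succ k ih =>
    have not_both : ¬ ((2 * k + 1).Prime ∧ (2 * k + 2).Prime) := by
      rintro ⟨hodd, heven⟩
      have := heven.eq_two_or_odd
      have := hodd.two_le
      omega
    rw [Nat.primeCounting'] at ih ⊢
    rw [show 2 * (k + 1) + 1 = 2 * k + 1 + 1 + 1 by ring, Nat.count_succ, Nat.count_succ]
    split_ifs <;> first | omega | tauto

theorem exists_two_mul_add_one_le_of_lt_card {P : Finset ℕ} (hP : ∀ p ∈ P, p.Prime) {k : ℕ}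
    (hk : k < P.card) : ∃ p ∈ P, 2 * k + 1 ≤ p := by
  by_contra! hlt
  have hsub : P ⊆ {p ∈ Finset.range (2 * k + 1) | p.Prime} := fun p hp ↦ by
    simpa using ⟨Nat.lt_succ_iff.mp (hlt p hp), hP p hp⟩
  have hcard := Finset.card_le_card hsub
  rw [← Nat.count_eq_card_filter_range] at hcard
  exact (hk.trans_le hcard).not_ge (primeCounting'_two_mul_add_one_le k)

theorem two_mul_doubleFactorial_le_prod_primes {P : Finset ℕ} (hP : ∀ p ∈ P, p.Prime) {k : ℕ}
    (hk : k < P.card) : 2 * (2 * k + 1)‼ ≤ ∏ p ∈ P, p := by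
  induction k generalizing P with
  | zero =>
    obtain ⟨p, hp⟩ := Finset.card_pos.mp hk
    have hpos : 0 < ∏ p ∈ P, p := Finset.prod_pos fun q hq ↦ (hP q hq).pos
    simpa using (hP p hp).two_le.trans (Nat.le_of_dvd hpos (Finset.dvd_prod_of_mem _ hp))
  | succ k ih =>
    obtain ⟨p, hp, hkp⟩ := exists_two_mul_add_one_le_of_lt_card hP hk
    have hcard : k < (P.erase p).card := by
      rw [Finset.card_erase_of_mem hp]
      omega
    calc 2 * (2 * (k + 1) + 1)‼
        = (2 * (k + 1) + 1) * (2 * (2 * k + 1)‼) := by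
          rw [show 2 * (k + 1) + 1 = 2 * k + 1 + 2 by ring, Nat.doubleFactorial_add_two]
          ring
      _ ≤ p * ∏ q ∈ P.erase p, q :=
          Nat.mul_le_mul hkp (ih (fun q hq ↦ hP q (Finset.mem_of_mem_erase hq)) hcard)
      _ = ∏ q ∈ P, q := Finset.mul_prod_erase P (fun q ↦ q) hp

theorem two_mul_doubleFactorial_le_of_lt_card_primeFactors {n k : ℕ}
    (hk : k < n.primeFactors.card) : 2 * (2 * k + 1)‼ ≤ n := by
  have hn : 0 < n := Nat.pos_of_ne_zero (by rintro rfl; simp at hk)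
  exact (two_mul_doubleFactorial_le_prod_primes (fun _ ↦ Nat.prime_of_mem_primeFactors) hk).trans
    (Nat.le_of_dvd hn (Nat.prod_primeFactors_dvd n))

theorem two_pow_mul_le_doubleFactorial {k : ℕ} (hk : 5 ≤ k) :
    2 ^ (k + 2) * ((4 * k + 3) * (4 * k + 21)) ≤ 20 * (2 * k + 1)‼ := by
  induction k, hk using Nat.le_induction with
  | base => decide
  | succ k hk ih =>
    have hstep : 2 * ((4 * (k + 1) + 3) * (4 * (k + 1) + 21)) ≤
        (2 * k + 3) * ((4 * k + 3) * (4 * k + 21)) :=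
      calc 2 * ((4 * (k + 1) + 3) * (4 * (k + 1) + 21))
          ≤ 13 * ((4 * k + 3) * (4 * k + 21)) := by nlinarith
        _ ≤ (2 * k + 3) * ((4 * k + 3) * (4 * k + 21)) := by gcongr; omega
    calc 2 ^ (k + 1 + 2) * ((4 * (k + 1) + 3) * (4 * (k + 1) + 21))
        = 2 ^ (k + 2) * (2 * ((4 * (k + 1) + 3) * (4 * (k + 1) + 21))) := by ring
      _ ≤ 2 ^ (k + 2) * ((2 * k + 3) * ((4 * k + 3) * (4 * k + 21))) := by gcongr
      _ = (2 * k + 3) * (2 ^ (k + 2) * ((4 * k + 3) * (4 * k + 21))) := by ring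
      _ ≤ (2 * k + 3) * (20 * (2 * k + 1)‼) := by gcongr
      _ = 20 * (2 * (k + 1) + 1)‼ := by
        rw [show 2 * (k + 1) + 1 = 2 * k + 1 + 2 by ring, Nat.doubleFactorial_add_two]
        ring

end PrimeProducts

theorem four_mul_add_le_two_pow {s : ℕ} (hs : 5 ≤ s) : 4 * s + 17 ≤ 2 ^ (s + 1) := by
  induction s, hs using Nat.le_induction with
  | base => norm_num
  | succ s _ ih =>
    rw [pow_succ]
    omega

theorem two_pow_sq_mul_le_of_le_five {x : ℝ} {s : ℕ} (hx : 4376 ≤ x) (hs : 1 ≤ s) (hs5 : s ≤ 5) :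
    (2 ^ (s + 1)) ^ 2 * ((4 * s - 1) * (4 * s + 17)) ≤
      2 * x * (6 * 2 ^ (s + 1) - (4 * s + 17)) := by
  interval_cases s <;> norm_num <;> linarith

theorem two_pow_sq_mul_le_of_six_le {n s : ℕ} (hs6 : 6 ≤ s) (hs : s ≤ n.primeFactors.card) :
    ((2 : ℝ) ^ (s + 1)) ^ 2 * ((4 * s - 1) * (4 * s + 17)) ≤
      2 * n * (6 * 2 ^ (s + 1) - (4 * s + 17)) := by
  have hpow : 4 * (s : ℝ) + 17 ≤ 2 ^ (s + 1) := by
    exact_mod_cast four_mul_add_le_two_pow (by omega : 5 ≤ s)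
  have hn : (2 : ℝ) ^ (s + 1) * ((4 * s - 1) * (4 * s + 17)) ≤ 10 * n := by
    obtain ⟨k, rfl⟩ : ∃ k, s = k + 1 := ⟨s - 1, by omega⟩
    have hnat : 2 ^ (k + 2) * ((4 * k + 3) * (4 * k + 21)) ≤ 10 * n := by
      linarith [two_pow_mul_le_doubleFactorial (by omega : 5 ≤ k),
        two_mul_doubleFactorial_le_of_lt_card_primeFactors hs]
    have hreal : (2 : ℝ) ^ (k + 2) * ((4 * k + 3) * (4 * k + 21)) ≤ 10 * n := by
      exact_mod_cast hnat
    convert hreal using 3 <;> push_cast <;> ring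
  calc ((2 : ℝ) ^ (s + 1)) ^ 2 * ((4 * s - 1) * (4 * s + 17))
      = 2 ^ (s + 1) * (2 ^ (s + 1) * ((4 * s - 1) * (4 * s + 17))) := by ring
    _ ≤ 2 ^ (s + 1) * (10 * n) := by gcongr
    _ = 2 * n * (5 * 2 ^ (s + 1)) := by ring
    _ ≤ 2 * n * (6 * 2 ^ (s + 1) - (4 * s + 17)) := by
      gcongr
      linarith

section FloorBound

variable {x T a b : ℝ}

theorem div_le_floor_of_sq_mul_le (hT : 0 < T) (ha : 0 ≤ a) (hb : 0 < b)
    (h : T ^ 2 * (a * b) ≤ x * (T * (b - a) - 1)) :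
    x / (T * b) ≤ (⌊(x + 1) / (T * a + 1)⌋₊ : ℝ) := by
  have hTa : 0 < T * a + 1 := by positivity
  have hgap : x / (T * b) ≤ (x + 1) / (T * a + 1) - 1 := by
    rw [div_sub_one hTa.ne', div_le_div_iff₀ (by positivity) hTa]
    linarith
  exact hgap.trans (Nat.sub_one_lt_floor _).le

-- The constant `18 = 2 * 3²` comes from `6 a ≤ a² + 9`, which is sharp at `a = 3`; with
-- `a = √(2s - 1)` this is `s = 5`, the case that needs the largest `n`.
theorem sq_mul_le_of_add_sq_bound (hx : 0 ≤ x) (ha : 0 ≤ a) (hb : 0 ≤ b)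
    (hab : b ^ 2 = a ^ 2 + 1)
    (h : T ^ 2 * ((a ^ 2 + b ^ 2) * (a ^ 2 + b ^ 2 + 18)) ≤
      2 * x * (6 * T - (a ^ 2 + b ^ 2 + 18))) :
    T ^ 2 * (a * b) ≤ x * (T * (b - a) - 1) := by
  have hsum_pos : 0 < a + b := by nlinarith
  have hprod : 2 * (a * b) ≤ a ^ 2 + b ^ 2 := by linarith [two_mul_le_add_sq a b]
  have hsum : 6 * (a + b) ≤ a ^ 2 + b ^ 2 + 18 := by
    linarith [sq_nonneg (a - 3), sq_nonneg (b - 3)]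
  have hscaled : 12 * (T ^ 2 * (a * b) * (a + b)) ≤ 12 * (x * (T - (a + b))) :=
    calc 12 * (T ^ 2 * (a * b) * (a + b))
        = T ^ 2 * (2 * (a * b) * (6 * (a + b))) := by ring
      _ ≤ T ^ 2 * ((a ^ 2 + b ^ 2) * (a ^ 2 + b ^ 2 + 18)) := by gcongr
      _ ≤ 2 * x * (6 * T - (a ^ 2 + b ^ 2 + 18)) := h
      _ ≤ 2 * x * (6 * T - 6 * (a + b)) := by gcongr
      _ = 12 * (x * (T - (a + b))) := by ring
  refine le_of_mul_le_mul_right ?_ hsum_pos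
  calc T ^ 2 * (a * b) * (a + b) ≤ x * (T - (a + b)) := by linarith
    _ = x * (T * (b ^ 2 - a ^ 2) - (a + b)) := by rw [hab]; ring
    _ = x * (T * (b - a) - 1) * (a + b) := by ring

end FloorBound

theorem stmt14_general {n s : ℕ} (hn : 4376 ≤ n) (hs1 : 1 ≤ s) (hs : s ≤ n.primeFactors.card) :
    (n : ℝ) / (2 ^ (s + 1) * Real.sqrt (2 * s)) ≤
      (⌊((n : ℝ) + 1) / (2 ^ (s + 1) * Real.sqrt (2 * s - 1) + 1)⌋₊ : ℝ) := by
  have hs1' : (1 : ℝ) ≤ s := by exact_mod_cast hs1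
  have root_free : ((2 : ℝ) ^ (s + 1)) ^ 2 * ((4 * s - 1) * (4 * s + 17)) ≤
      2 * n * (6 * 2 ^ (s + 1) - (4 * s + 17)) := by
    rcases Nat.lt_or_ge 5 s with hs6 | hs5
    · exact two_pow_sq_mul_le_of_six_le hs6 hs
    · exact two_pow_sq_mul_le_of_le_five (by exact_mod_cast hn) hs1 hs5
  have ha : Real.sqrt (2 * s - 1) ^ 2 = 2 * s - 1 := Real.sq_sqrt (by linarith)
  have hb : Real.sqrt (2 * s) ^ 2 = 2 * s := Real.sq_sqrt (by linarith)
  apply div_le_floor_of_sq_mul_le (by positivity) (Real.sqrt_nonneg _) (by positivity)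
  apply sq_mul_le_of_add_sq_bound (by positivity) (Real.sqrt_nonneg _) (Real.sqrt_nonneg _)
  · linarith
  · rw [ha, hb]
    convert root_free using 3 <;> ring

theorem stmt14 (n s : ℕ) (hn : 4376 ≤ n)
    (hs : n.primeFactors.card = s) (h2 : 2 ≤ s) :
    (n : ℝ) / (2 ^ (s + 1) * Real.sqrt (2 * s)) ≤
      (⌊((n : ℝ) + 1) / (2 ^ (s + 1) * Real.sqrt (2 * s - 1) + 1)⌋₊ : ℝ) :=
  stmt14_general hn (by omega) hs.ge
end
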